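/- Let d ≥ 1, q > 0, μ ∈ ℝ^d, and let C ∈ ℝ^{d×d} be symmetric positive definite. If the random vector u ∈ ℝ^d has the multivariate q-exponential density p(u) = (q/2)(2π)^{−d/2} det(C)^{−1/2} r(u)^{(q/2−1)(d/2)} exp{−(1/2) r(u)^{q/2}} with r(u) = (u−μ)ᵀ C^{−1} (u−μ), then the mean of u equals μ, i.e. for every coordinate i one has ∫_{ℝ^d} u_i p(u) du = μ_i. -/

import Mathlib

open Real MeasureTheory Matrix

/-!
The density is an even function of `u - μ`, so writing `u = μ + (u - μ)` splits the mean into `μ`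
times the total mass plus the integral of an odd function, which vanishes. It remains to see that
the density has total mass one and a finite first moment. Factoring `C⁻¹ = Bᵀ * B` and substituting
`x = B (u - μ)` turns both into integrals of functions of `‖x‖`, which polar coordinates reduce to
Gamma integrals `∫ r ^ s * exp (-r ^ q / 2)` over `r > 0`.
-/

open Module (finrank)

section Symmetry

variable {G F : Type*} [AddGroup G] [MeasurableSpace G] [MeasurableNeg G]
  {ν : Measure G} [NormedAddCommGroup F] [NormedSpace ℝ F]

lemma integral_eq_zero_of_odd [ν.IsNegInvariant] {f : G → F} (hf : Function.Odd f) :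
    ∫ x, f x ∂ν = 0 := by
  have h : -∫ x, f x ∂ν = ∫ x, f x ∂ν := by
    rw [← integral_neg, ← integral_neg_eq_self f ν]
    simp only [hf _]
  have : IsAddTorsionFree F := .of_isTorsionFree ℝ F
  exact self_eq_neg.mp h.symm

lemma integral_comp_sub_smul_addMonoidHom_of_even [MeasurableAdd G] [CompleteSpace F]
    [ν.IsNegInvariant] [ν.IsAddRightInvariant] {f : G → ℝ} (hf : Function.Even f)
    (hf_int : Integrable f ν) (L : G →+ F)
    (hfL_int : Integrable (fun x ↦ f x • L x) ν) (m : G) :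
    ∫ u, f (u - m) • L u ∂ν = (∫ x, f x ∂ν) • L m := by
  have hodd : Function.Odd fun x ↦ f x • L x := fun x ↦ by simp only [hf x, map_neg, smul_neg]
  calc ∫ u, f (u - m) • L u ∂ν
      = ∫ x, (f x • L x + f x • L m) ∂ν := by
        rw [← integral_add_right_eq_self _ m]
        simp only [add_sub_cancel_right, map_add, smul_add]
    _ = (∫ x, f x ∂ν) • L m := by
        rw [integral_add hfL_int (hf_int.smul_const _), integral_eq_zero_of_odd hodd, zero_add,
          integral_smul_const]

end Symmetry

section Radial

variable {E : Type*} [NormedAddCommGroup E] [NormedSpace ℝ E] [MeasurableSpace E]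

lemma integrable_smul_continuousLinearMap [OpensMeasurableSpace E] [SecondCountableTopology E]
    {F : Type*} [NormedAddCommGroup F] [NormedSpace ℝ F] {ν : Measure E} {f : E → ℝ}
    (hf : AEStronglyMeasurable f ν) (hf_int : Integrable (fun x ↦ ‖x‖ * f x) ν) (L : E →L[ℝ] F) :
    Integrable (fun x ↦ f x • L x) ν := by
  refine (hf_int.const_mul ‖L‖).mono (hf.smul L.continuous.aestronglyMeasurable) (.of_forall ?_)
  intro x
  calc ‖f x • L x‖ ≤ ‖f x‖ * (‖L‖ * ‖x‖) := by
        rw [norm_smul]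
        gcongr
        exact L.le_opNorm x
    _ = ‖‖L‖ * (‖x‖ * f x)‖ := by
        simp only [norm_mul, norm_norm]
        ring

lemma pow_pred_mul_rpow {r : ℝ} (hr : 0 < r) {n : ℕ} (hn : 0 < n) (s : ℝ) :
    r ^ (n - 1) * r ^ s = r ^ (s + n - 1) := by
  rw [← rpow_natCast, ← rpow_add hr, Nat.cast_pred hn]
  ring_nf

variable [BorelSpace E] [FiniteDimensional ℝ E] [Nontrivial E]
  (ν : Measure E) [ν.IsAddHaarMeasure]

lemma integrable_norm_rpow_mul_exp_neg_mul_norm_rpow {s p b : ℝ} (hs : 0 < s + finrank ℝ E)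
    (hp : 0 < p) (hb : 0 < b) : Integrable (fun x ↦ ‖x‖ ^ s * exp (-b * ‖x‖ ^ p)) ν := by
  rw [integrable_fun_norm_addHaar ν (f := fun r ↦ r ^ s * exp (-b * r ^ p))]
  have hint := integrableOn_rpow_mul_exp_neg_mul_rpow (s := s + finrank ℝ E - 1) (by linarith) hp hb
  refine hint.congr_fun (fun r hr ↦ ?_) measurableSet_Ioi
  rw [smul_eq_mul, ← mul_assoc, pow_pred_mul_rpow hr Module.finrank_pos]

lemma integral_norm_rpow_mul_exp_neg_mul_norm_rpow {s p b : ℝ} (hs : 0 < s + finrank ℝ E)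
    (hp : 0 < p) (hb : 0 < b) :
    ∫ x, ‖x‖ ^ s * exp (-b * ‖x‖ ^ p) ∂ν =
      finrank ℝ E * ν.real (Metric.ball 0 1) *
        (b ^ (-(s + finrank ℝ E) / p) * (1 / p) * Gamma ((s + finrank ℝ E) / p)) := by
  have hradial : ∫ r in Set.Ioi (0 : ℝ), r ^ (finrank ℝ E - 1) • (r ^ s * exp (-b * r ^ p)) =
      ∫ r in Set.Ioi (0 : ℝ), r ^ (s + finrank ℝ E - 1) * exp (-b * r ^ p) :=
    setIntegral_congr_fun measurableSet_Ioi fun r hr ↦ by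
      rw [smul_eq_mul, ← mul_assoc, pow_pred_mul_rpow hr Module.finrank_pos]
  rw [integral_fun_norm_addHaar ν (fun r ↦ r ^ s * exp (-b * r ^ p)), hradial,
    integral_rpow_mul_exp_neg_mul_rpow hp (by linarith) hb, sub_add_cancel, nsmul_eq_mul,
    smul_eq_mul, ← mul_assoc]

end Radial

section Profile

/-- The `q`-exponential density in dimension `n` with identity scale matrix, as a function of the
squared distance `r` to the mean. -/
noncomputable def qEDProfile (q : ℝ) (n : ℕ) (r : ℝ) : ℝ :=
  q / 2 * (2 * π) ^ (-(n : ℝ) / 2) * r ^ ((q / 2 - 1) * ((n : ℝ) / 2)) *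
    exp (-(1 / 2) * r ^ (q / 2))

lemma qEDProfile_sq (q : ℝ) (n : ℕ) {t : ℝ} (ht : 0 ≤ t) :
    qEDProfile q n (t ^ 2) =
      q / 2 * (2 * π) ^ (-(n : ℝ) / 2) * (t ^ ((q / 2 - 1) * n) * exp (-(1 / 2) * t ^ q)) := by
  have hpow (s : ℝ) : (t ^ 2) ^ (s / 2) = t ^ s := by
    rw [← rpow_natCast_mul ht, Nat.cast_ofNat, mul_div_cancel₀ _ two_ne_zero]
  rw [qEDProfile, ← mul_div_assoc, hpow, hpow, mul_assoc]

section NormedSpace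

variable {E : Type*} [NormedAddCommGroup E] [NormedSpace ℝ E] [MeasurableSpace E] [BorelSpace E]
  [FiniteDimensional ℝ E] [Nontrivial E] {ν : Measure E} [ν.IsAddHaarMeasure] {q : ℝ}

lemma integrable_norm_pow_mul_qEDProfile_norm_sq {n : ℕ} (hn : finrank ℝ E = n) (hq : 0 < q)
    (k : ℕ) : Integrable (fun x ↦ ‖x‖ ^ k * qEDProfile q n (‖x‖ ^ 2)) ν := by
  subst hn
  have hn : (0 : ℝ) < finrank ℝ E := by exact_mod_cast Module.finrank_pos
  have hs : 0 < k + (q / 2 - 1) * finrank ℝ E + finrank ℝ E :=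
    calc 0 < k + q / 2 * finrank ℝ E := by positivity
      _ = k + (q / 2 - 1) * finrank ℝ E + finrank ℝ E := by ring
  refine ((integrable_norm_rpow_mul_exp_neg_mul_norm_rpow ν hs hq one_half_pos).const_mul
    (q / 2 * (2 * π) ^ (-(finrank ℝ E : ℝ) / 2))).congr ?_
  -- At `x = 0` the powers need not combine, since `0 ^ (0 : ℝ) = 1`.
  filter_upwards [ν.ae_ne (0 : E)] with x hx
  rw [qEDProfile_sq _ _ (norm_nonneg x), rpow_add (norm_pos_iff.mpr hx), rpow_natCast]
  ring

lemma integrable_qEDProfile_norm_sq {n : ℕ} (hn : finrank ℝ E = n) (hq : 0 < q) :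
    Integrable (fun x ↦ qEDProfile q n (‖x‖ ^ 2)) ν := by
  simpa only [pow_zero, one_mul] using integrable_norm_pow_mul_qEDProfile_norm_sq hn hq 0

lemma integrable_norm_mul_qEDProfile_norm_sq {n : ℕ} (hn : finrank ℝ E = n) (hq : 0 < q) :
    Integrable (fun x ↦ ‖x‖ * qEDProfile q n (‖x‖ ^ 2)) ν := by
  simpa only [pow_one] using integrable_norm_pow_mul_qEDProfile_norm_sq hn hq 1

end NormedSpace

section InnerProductSpace

variable {E : Type*} [NormedAddCommGroup E] [InnerProductSpace ℝ E] [MeasurableSpace E]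
  [BorelSpace E] [FiniteDimensional ℝ E] [Nontrivial E] {q : ℝ}

lemma finrank_mul_volume_real_unit_ball :
    finrank ℝ E * volume.real (Metric.ball (0 : E) 1) =
      2 * π ^ (finrank ℝ E / 2 : ℝ) / Gamma (finrank ℝ E / 2) := by
  have hn : (0 : ℝ) < finrank ℝ E := by exact_mod_cast Module.finrank_pos
  have : 0 < Gamma (finrank ℝ E / 2 : ℝ) := Gamma_pos_of_pos (by positivity)
  have hπ : √π ^ finrank ℝ E = π ^ (finrank ℝ E / 2 : ℝ) := by
    rw [sqrt_eq_rpow, ← rpow_mul_natCast pi_nonneg, one_div_mul_eq_div]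
  rw [measureReal_def, InnerProductSpace.volume_ball, hπ, Gamma_add_one (by positivity),
    ENNReal.ofReal_one, one_pow, one_mul, ENNReal.toReal_ofReal (by positivity)]
  field_simp

lemma integral_qEDProfile_norm_sq {n : ℕ} (hn : finrank ℝ E = n) (hq : 0 < q) :
    ∫ x : E, qEDProfile q n (‖x‖ ^ 2) = 1 := by
  subst hn
  have hn : (0 : ℝ) < finrank ℝ E := by exact_mod_cast Module.finrank_pos
  have : 0 < Gamma (finrank ℝ E / 2 : ℝ) := Gamma_pos_of_pos (by positivity)
  -- The Gamma argument becomes `n / 2` for every `q`, cancelling the one in the volume of the ball.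
  have hexp : (q / 2 - 1) * finrank ℝ E + finrank ℝ E = q * (finrank ℝ E / 2) := by ring
  have hb : (1 / 2 : ℝ) ^ (-(finrank ℝ E / 2 : ℝ)) = 2 ^ (finrank ℝ E / 2 : ℝ) := by
    rw [rpow_neg (by positivity), ← inv_rpow (by positivity), one_div, inv_inv]
  simp only [qEDProfile_sq _ _ (norm_nonneg _)]
  rw [integral_const_mul, integral_norm_rpow_mul_exp_neg_mul_norm_rpow volume
    (hexp ▸ by positivity) hq one_half_pos, finrank_mul_volume_real_unit_ball, hexp, neg_div,
    neg_div, mul_div_cancel_left₀ _ hq.ne', hb, rpow_neg (by positivity),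
    mul_rpow two_pos.le pi_nonneg]
  field_simp

end InnerProductSpace

end Profile

section QuadraticForm

variable {ι : Type*} [Fintype ι] {A : Matrix ι ι ℝ}

lemma exists_continuousLinearEquiv_norm_sq_eq_dotProduct_mulVec [DecidableEq ι] (hA : A.PosDef) :
    ∃ T : (ι → ℝ) ≃L[ℝ] EuclideanSpace ℝ ι, (∀ v, ‖T v‖ ^ 2 = v ⬝ᵥ A *ᵥ v) ∧
      volume.map T = ENNReal.ofReal (√A.det)⁻¹ • volume := by
  obtain ⟨B, rfl⟩ : ∃ B : Matrix ι ι ℝ, A = Bᵀ * B := by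
    open scoped MatrixOrder in
    exact CStarAlgebra.nonneg_iff_eq_star_mul_self.mp hA.posSemidef.nonneg
  have hdet : √(Bᵀ * B).det = |B.det| := by
    rw [det_mul, det_transpose, sqrt_mul_self_eq_abs]
  have hB : B.det ≠ 0 := abs_pos.mp (hdet ▸ sqrt_pos.mpr hA.det_pos)
  refine ⟨((B.toLinearEquiv' (B.invertibleOfIsUnitDet hB.isUnit)).toContinuousLinearEquiv).trans
    (PiLp.continuousLinearEquiv 2 ℝ fun _ : ι ↦ ℝ).symm, fun v ↦ ?_, ?_⟩
  · change ‖WithLp.toLp 2 (B *ᵥ v)‖ ^ 2 = _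
    rw [EuclideanSpace.real_norm_sq_eq, ← mulVec_mulVec, dotProduct_mulVec, vecMul_transpose]
    simp only [dotProduct, sq]
  · change volume.map (WithLp.toLp 2 ∘ toLin' B) = _
    rw [← Measure.map_map (by fun_prop) (toLin' B).continuous_of_finiteDimensional.measurable,
      Real.map_matrix_volume_pi_eq_smul_volume_pi hB, Measure.map_smul,
      (PiLp.volume_preserving_toLp ι).map_eq, hdet, abs_inv]

variable {F : Type*} [NormedAddCommGroup F]

lemma integral_comp_dotProduct_mulVec [DecidableEq ι] [NormedSpace ℝ F] (hA : A.PosDef)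
    (g : ℝ → F) :
    ∫ v, g (v ⬝ᵥ A *ᵥ v) = (√A.det)⁻¹ • ∫ x : EuclideanSpace ℝ ι, g (‖x‖ ^ 2) := by
  obtain ⟨T, hT, hmap⟩ := exists_continuousLinearEquiv_norm_sq_eq_dotProduct_mulVec hA
  have hT_emb : MeasurableEmbedding T := T.toHomeomorph.measurableEmbedding
  simp only [← hT]
  rw [← hT_emb.integral_map (fun x ↦ g (‖x‖ ^ 2)), hmap, integral_smul_measure,
    ENNReal.toReal_ofReal (by positivity)]

lemma integrable_comp_dotProduct_mulVec (hA : A.PosDef) {g : ℝ → F}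
    (hg : Integrable fun x : EuclideanSpace ℝ ι ↦ g (‖x‖ ^ 2)) :
    Integrable fun v ↦ g (v ⬝ᵥ A *ᵥ v) := by
  classical
  obtain ⟨T, hT, hmap⟩ := exists_continuousLinearEquiv_norm_sq_eq_dotProduct_mulVec hA
  have hT_emb : MeasurableEmbedding T := T.toHomeomorph.measurableEmbedding
  simp only [← hT]
  exact hT_emb.integrable_map_iff.mp (hmap ▸ hg.smul_measure ENNReal.ofReal_ne_top)

lemma integrable_comp_dotProduct_mulVec_smul [NormedSpace ℝ F] (hA : A.PosDef) {g : ℝ → ℝ}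
    (hg : AEStronglyMeasurable fun x : EuclideanSpace ℝ ι ↦ g (‖x‖ ^ 2))
    (hg_int : Integrable fun x : EuclideanSpace ℝ ι ↦ ‖x‖ * g (‖x‖ ^ 2)) (L : (ι → ℝ) →L[ℝ] F) :
    Integrable fun v ↦ g (v ⬝ᵥ A *ᵥ v) • L v := by
  classical
  obtain ⟨T, hT, hmap⟩ := exists_continuousLinearEquiv_norm_sq_eq_dotProduct_mulVec hA
  have hT_emb : MeasurableEmbedding T := T.toHomeomorph.measurableEmbedding
  have hint := integrable_smul_continuousLinearMap hg hg_int (L ∘L T.symm)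
  have hcomp := hT_emb.integrable_map_iff.mp (hmap ▸ hint.smul_measure ENNReal.ofReal_ne_top)
  refine hcomp.congr (.of_forall fun v ↦ ?_)
  simp [hT]

end QuadraticForm

section Density

variable {ι : Type*} [Fintype ι] [DecidableEq ι] {q : ℝ} {C : Matrix ι ι ℝ}

/-- The density of the multivariate `q`-exponential distribution `q-ED_d(μ, C)`, with the
dimension `d` taken to be the cardinality of the index type. -/
noncomputable def qEDPDF (q : ℝ) (μ : ι → ℝ) (C : Matrix ι ι ℝ) (u : ι → ℝ) : ℝ :=
  q / 2 * (2 * π) ^ (-(Fintype.card ι : ℝ) / 2) * C.det ^ (-(1 : ℝ) / 2) *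
    ((u - μ) ⬝ᵥ (C⁻¹ *ᵥ (u - μ))) ^ ((q / 2 - 1) * ((Fintype.card ι : ℝ) / 2)) *
    exp (-(1 / 2) * ((u - μ) ⬝ᵥ (C⁻¹ *ᵥ (u - μ))) ^ (q / 2))

lemma qEDPDF_zero_sub (q : ℝ) (μ : ι → ℝ) (C : Matrix ι ι ℝ) (u : ι → ℝ) :
    qEDPDF q 0 C (u - μ) = qEDPDF q μ C u := by
  simp only [qEDPDF, sub_zero]

lemma even_qEDPDF_zero (q : ℝ) (C : Matrix ι ι ℝ) : Function.Even (qEDPDF q 0 C) := fun v ↦ by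
  simp only [qEDPDF, sub_zero, mulVec_neg, neg_dotProduct_neg]

lemma qEDPDF_eq_qEDProfile (q : ℝ) (μ : ι → ℝ) (C : Matrix ι ι ℝ) (u : ι → ℝ) :
    qEDPDF q μ C u = C.det ^ (-(1 : ℝ) / 2) *
      qEDProfile q (Fintype.card ι) ((u - μ) ⬝ᵥ C⁻¹ *ᵥ (u - μ)) := by
  rw [qEDPDF, qEDProfile]
  ring

variable [Nonempty ι]

lemma integral_qEDPDF (hq : 0 < q) (μ : ι → ℝ) (hC : C.PosDef) : ∫ u, qEDPDF q μ C u = 1 := by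
  have hdet : (√C⁻¹.det)⁻¹ = C.det ^ (1 / 2 : ℝ) := by
    rw [det_nonsing_inv, Ring.inverse_eq_inv', sqrt_inv, inv_inv, sqrt_eq_rpow]
  calc ∫ u, qEDPDF q μ C u
      = C.det ^ (-(1 : ℝ) / 2) * ∫ v, qEDProfile q (Fintype.card ι) (v ⬝ᵥ C⁻¹ *ᵥ v) := by
        simp only [qEDPDF_eq_qEDProfile, integral_const_mul]
        rw [integral_sub_right_eq_self (fun v ↦ qEDProfile q _ (v ⬝ᵥ C⁻¹ *ᵥ v)) μ]
    _ = C.det ^ (-(1 : ℝ) / 2) * C.det ^ (1 / 2 : ℝ) := by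
        rw [integral_comp_dotProduct_mulVec hC.inv,
          integral_qEDProfile_norm_sq (E := EuclideanSpace ℝ ι) finrank_euclideanSpace hq, hdet,
          smul_eq_mul, mul_one]
    _ = 1 := by rw [← rpow_add hC.det_pos, neg_div, neg_add_cancel, rpow_zero]

lemma integrable_qEDPDF (hq : 0 < q) (μ : ι → ℝ) (hC : C.PosDef) :
    Integrable (qEDPDF q μ C) := by
  have hradial := integrable_qEDProfile_norm_sq (E := EuclideanSpace ℝ ι) (ν := volume)
    finrank_euclideanSpace hq
  have h := (integrable_comp_dotProduct_mulVec hC.inv hradial).const_mul (C.det ^ (-(1 : ℝ) / 2))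
  simpa only [← qEDPDF_eq_qEDProfile] using h.comp_sub_right μ

variable {F : Type*} [NormedAddCommGroup F] [NormedSpace ℝ F]

lemma integrable_qEDPDF_smul (hq : 0 < q) (μ : ι → ℝ) (hC : C.PosDef) (L : (ι → ℝ) →L[ℝ] F) :
    Integrable fun u ↦ qEDPDF q μ C u • L u := by
  have hcentered : Integrable fun v ↦ qEDPDF q 0 C v • L v := by
    have hradial := integrable_qEDProfile_norm_sq (E := EuclideanSpace ℝ ι) (ν := volume)
      finrank_euclideanSpace hq
    have hradial_norm := integrable_norm_mul_qEDProfile_norm_sq (E := EuclideanSpace ℝ ι)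
      (ν := volume) finrank_euclideanSpace hq
    have h := (integrable_comp_dotProduct_mulVec_smul hC.inv hradial.aestronglyMeasurable
      hradial_norm L).smul (C.det ^ (-(1 : ℝ) / 2))
    simpa only [Pi.smul_def, smul_smul, qEDPDF_eq_qEDProfile, sub_zero] using h
  have h := (hcentered.add ((integrable_qEDPDF hq 0 hC).smul_const (L μ))).comp_sub_right μ
  simpa only [Pi.add_apply, ← smul_add, ← map_add, sub_add_cancel, qEDPDF_zero_sub] using h

theorem qED_mean_general [CompleteSpace F] (hq : 0 < q) (μ : ι → ℝ) (hC : C.PosDef)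
    (L : (ι → ℝ) →L[ℝ] F) : ∫ u, qEDPDF q μ C u • L u = L μ := by
  have h := integral_comp_sub_smul_addMonoidHom_of_even (even_qEDPDF_zero q C)
    (integrable_qEDPDF hq 0 hC) (L : (ι → ℝ) →+ F) (integrable_qEDPDF_smul hq 0 hC L) μ
  simpa only [qEDPDF_zero_sub, integral_qEDPDF hq 0 hC, one_smul, AddMonoidHom.coe_coe] using h

end Density

/-- If `u` has the multivariate q-exponential density `q-ED_d(μ, C)`, then the mean
of `u` equals `μ`: for every coordinate `i`, `∫ u_i p(u) du = μ_i`. -/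
theorem qED_mean
    (d : ℕ) (hd : 1 ≤ d) (q : ℝ) (hq : 0 < q)
    (μ : Fin d → ℝ) (C : Matrix (Fin d) (Fin d) ℝ) (hC : C.PosDef) :
    ∀ i : Fin d,
      ∫ u : Fin d → ℝ,
        u i *
          (q / 2 * (2 * Real.pi) ^ (-(d : ℝ) / 2) * C.det ^ (-(1 : ℝ) / 2) *
            ((u - μ) ⬝ᵥ (C⁻¹ *ᵥ (u - μ))) ^ ((q / 2 - 1) * ((d : ℝ) / 2)) *
            Real.exp (-(1 / 2) * ((u - μ) ⬝ᵥ (C⁻¹ *ᵥ (u - μ))) ^ (q / 2))) = μ i := by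
  intro i
  have : Nonempty (Fin d) := ⟨i⟩
  simpa only [qEDPDF, Fintype.card_fin, smul_eq_mul, mul_comm, ContinuousLinearMap.proj_apply] using
    qED_mean_general hq μ hC (ContinuousLinearMap.proj i)
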